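/- There exists a constant C > 0 such that for every R with 0 < R < e^{-1} and every φ ∈ H¹(ℝ², ℂ), ∭_{(ℝ²)³} ( K_R(x − y) · K_R(x − z) )² |φ(x)|² |φ(y)|² |φ(z)|² dx dy dz ≤ C |log R|² ‖φ‖_{H¹}⁶. -/

import Mathlib

noncomputable section
open MeasureTheory ENNReal
open scoped RealInnerProductSpace

/-- The plane `ℝ²`. -/
abbrev E2 : Type := EuclideanSpace ℝ (Fin 2)

/-- The rotation by 90 degrees: `x^⊥ = (-x₂, x₁)`. -/
def perp (x : E2) : E2 := (WithLp.equiv 2 (Fin 2 → ℝ)).symm ![-(x 1), x 0]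

/-- The Aharonov–Bohm kernel `K_R(x) = x^⊥ / (max R ‖x‖)²` (with `K_R 0 = 0`,
also when `R = 0`, by the junk-value convention `(0 : ℝ)⁻¹ = 0`). -/
def K (R : ℝ) (x : E2) : E2 := ((max R ‖x‖) ^ 2)⁻¹ • perp x

/-- The standard basis of `ℝ²`. -/
def e2 (j : Fin 2) : E2 := EuclideanSpace.single j 1

/-- Componentwise convolution of the vector kernel `K_R` with a scalar density. -/
def convKs (R : ℝ) (ρ : E2 → ℝ) (x : E2) : E2 := ∫ y, ρ y • K R (x - y)

/-- Convolution of the vector kernel `K_R` with a vector field, summed over components. -/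
def convKv (R : ℝ) (F : E2 → E2) (x : E2) : ℝ := ∫ y, ⟪K R (x - y), F y⟫

/-- The current `J[u] = i(u∇ū - ū∇u) = 2 Im(ū ∇u)`, an `ℝ²`-valued function. -/
def Jf (u : E2 → ℂ) (x : E2) : E2 :=
  (WithLp.equiv 2 (Fin 2 → ℝ)).symm fun j =>
    2 * ((starRingEnd ℂ) (u x) * fderiv ℝ u x (e2 j)).im

/-- The `H¹` norm `(‖u‖₂² + ‖∇u‖₂²)^{1/2}` (extended-real valued). -/
def H1 (u : E2 → ℂ) : ℝ≥0∞ :=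
  (eLpNorm u 2 volume ^ 2 + eLpNorm (fun x => fderiv ℝ u x) 2 volume ^ 2) ^ (1 / 2 : ℝ)

/-- The `H²` norm `(‖u‖₂² + ‖∇u‖₂² + ‖∇²u‖₂²)^{1/2}` (extended-real valued). -/
def H2 (u : E2 → ℂ) : ℝ≥0∞ :=
  (eLpNorm u 2 volume ^ 2 + eLpNorm (fun x => fderiv ℝ u x) 2 volume ^ 2
    + eLpNorm (fun x => fderiv ℝ (fderiv ℝ u) x) 2 volume ^ 2) ^ (1 / 2 : ℝ)

/-!
By Cauchy–Schwarz `(K_R(x−y)·K_R(x−z))² ≤ |K_R(x−y)|² |K_R(x−z)|²`, so with `a = |φ|²` and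
`k = |K_R|²` the triple integral is at most `∫ a (a ⋆ k)²`. Outside the unit ball `k ≤ 1`, which
contributes `‖φ‖₂⁶`; inside it, the Hölder and Young inequalities give `(∫_{|x|<1} k)² ∫ |φ|⁶`,
where the mass of `k` is of order `|log R|`, one logarithm per convolution. Finally
`‖φ³‖₂ ≤ 6 ‖φ‖_{H¹}³` follows by applying the Gagliardo–Nirenberg–Sobolev inequality
`‖u‖₂ ≤ ‖∇u‖₁` to `u = φ²` and then to `u = φ³`.

That inequality is needed for functions that are neither `C¹` nor compactly supported. The
fundamental theorem of calculus, on which it rests, is still available on almost every line: there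
`u` is integrable by Fubini, and an integrable function with integrable derivative vanishes at
infinity.
-/

theorem enorm_le_lintegral_enorm_deriv {F : Type*} [NormedAddCommGroup F] [NormedSpace ℝ F]
    [CompleteSpace F] {g : ℝ → F} (hg : Differentiable ℝ g) (hint : Integrable g) (a : ℝ) :
    ‖g a‖ₑ ≤ ∫⁻ t, ‖deriv g t‖ₑ := by
  obtain h_top | h_fin := eq_top_or_lt_top (∫⁻ t, ‖deriv g t‖ₑ)
  · exact h_top ▸ le_top
  have hderiv : ∀ t ∈ Set.Iic a, HasDerivAt g (deriv g t) t := fun t _ => (hg t).hasDerivAt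
  have hint' : Integrable (deriv g) := ⟨(stronglyMeasurable_deriv g).aestronglyMeasurable, h_fin⟩
  have hlim : Filter.Tendsto g Filter.atBot (nhds 0) :=
    tendsto_zero_of_hasDerivAt_of_integrableOn_Iic hderiv hint'.integrableOn hint.integrableOn
  calc ‖g a‖ₑ = ‖∫ t in Set.Iic a, deriv g t‖ₑ := by
        rw [integral_Iic_of_hasDerivAt_of_tendsto' hderiv hint'.integrableOn hlim, sub_zero]
    _ ≤ ∫⁻ t in Set.Iic a, ‖deriv g t‖ₑ := enorm_integral_le_lintegral_enorm _
    _ ≤ ∫⁻ t, ‖deriv g t‖ₑ := setLIntegral_le_lintegral _ _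

theorem ae_lintegral_update_lt_top {n : ℕ} {X : Fin (n + 1) → Type*}
    [∀ i, MeasurableSpace (X i)] (μ : ∀ i, Measure (X i)) [∀ i, SigmaFinite (μ i)]
    {f : (∀ i, X i) → ℝ≥0∞} (hf : Measurable f) (hint : ∫⁻ x, f x ∂Measure.pi μ ≠ ⊤)
    (i : Fin (n + 1)) :
    ∀ᵐ x ∂Measure.pi μ, ∫⁻ t, f (Function.update x i t) ∂μ i < ⊤ := by
  have hsplit := measurePreserving_piFinSuccAbove μ i
  have hf' : Measurable fun z : X i × (∀ j, X (i.succAbove j)) => f (i.insertNth z.1 z.2) :=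
    hf.comp (MeasurableEquiv.piFinSuccAbove X i).symm.measurable
  rw [← hsplit.symm.lintegral_comp_emb (MeasurableEquiv.measurableEmbedding _),
    lintegral_prod_symm _ (by exact hf'.aemeasurable)] at hint
  have hfin := ae_lt_top hf'.lintegral_prod_left' hint
  have hproj := Measure.quasiMeasurePreserving_snd.comp hsplit.quasiMeasurePreserving
  filter_upwards [hproj.ae hfin] with x hx
  simpa [Fin.insertNthEquiv] using hx

section Sobolev

variable {n : ℕ} {F : Type*} [NormedAddCommGroup F] [NormedSpace ℝ F]

theorem hasDerivAt_comp_toLp_update {u : EuclideanSpace ℝ (Fin n) → F}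
    (hu : Differentiable ℝ u) (x : Fin n → ℝ) (i : Fin n) (t : ℝ) :
    HasDerivAt (fun s => u (.toLp 2 (Function.update x i s)))
      (fderiv ℝ u (.toLp 2 (Function.update x i t)) (EuclideanSpace.single i 1)) t :=
  (hu _).hasFDerivAt.comp_hasDerivAt t
    ((PiLp.hasFDerivAt_toLp (𝕜 := ℝ) 2 _).comp_hasDerivAt t (hasDerivAt_update x i t))

theorem enorm_deriv_comp_toLp_update_le {u : EuclideanSpace ℝ (Fin n) → F}
    (hu : Differentiable ℝ u) (x : Fin n → ℝ) (i : Fin n) (t : ℝ) :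
    ‖deriv (fun s => u (.toLp 2 (Function.update x i s))) t‖ₑ
      ≤ ‖fderiv ℝ u (.toLp 2 (Function.update x i t))‖ₑ := by
  rw [(hasDerivAt_comp_toLp_update hu x i t).deriv]
  refine (ContinuousLinearMap.le_opENorm _ _).trans_eq ?_
  rw [← ofReal_norm (EuclideanSpace.single i (1 : ℝ)), PiLp.norm_single, norm_one,
    ofReal_one, mul_one]

variable [CompleteSpace F]

theorem ae_enorm_le_lintegral_enorm_fderiv_update {u : EuclideanSpace ℝ (Fin (n + 1)) → F}
    (hu : Differentiable ℝ u) (hint : Integrable u) :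
    ∀ᵐ x : Fin (n + 1) → ℝ, ∀ i,
      ‖u (.toLp 2 x)‖ₑ ≤ ∫⁻ t, ‖fderiv ℝ u (.toLp 2 (Function.update x i t))‖ₑ := by
  have htoLp := PiLp.volume_preserving_toLp (Fin (n + 1))
  have hmeas : Measurable fun x : Fin (n + 1) → ℝ => ‖u (.toLp 2 x)‖ₑ :=
    (hu.continuous.comp (PiLp.continuous_toLp 2 _)).enorm.measurable
  have hfin : ∫⁻ x : Fin (n + 1) → ℝ, ‖u (.toLp 2 x)‖ₑ ≠ ⊤ := by
    rw [htoLp.lintegral_comp hu.continuous.enorm.measurable]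
    exact hint.2.ne
  refine ae_all_iff.2 fun i => ?_
  filter_upwards [ae_lintegral_update_lt_top (fun _ => volume) hmeas hfin i] with x hx
  have hline : Differentiable ℝ fun t => u (.toLp 2 (Function.update x i t)) := fun t =>
    (hasDerivAt_comp_toLp_update hu x i t).differentiableAt
  calc ‖u (.toLp 2 x)‖ₑ = ‖u (.toLp 2 (Function.update x i (x i)))‖ₑ := by
        rw [Function.update_eq_self]
    _ ≤ ∫⁻ t, ‖deriv (fun s => u (.toLp 2 (Function.update x i s))) t‖ₑ :=
        enorm_le_lintegral_enorm_deriv hline ⟨hline.continuous.aestronglyMeasurable, hx⟩ (x i)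
    _ ≤ ∫⁻ t, ‖fderiv ℝ u (.toLp 2 (Function.update x i t))‖ₑ :=
        lintegral_mono (enorm_deriv_comp_toLp_update_le hu x i)

theorem lintegral_enorm_rpow_le_lintegral_enorm_fderiv_rpow
    {p : ℝ} (hp : Real.HolderConjugate (n + 1) p) {u : EuclideanSpace ℝ (Fin (n + 1)) → F}
    (hu : Differentiable ℝ u) (hint : Integrable u) :
    ∫⁻ x, ‖u x‖ₑ ^ p ≤ (∫⁻ x, ‖fderiv ℝ u x‖ₑ) ^ p := by
  have htoLp := PiLp.volume_preserving_toLp (Fin (n + 1))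
  have hderiv : Measurable fun x => ‖fderiv ℝ u x‖ₑ := by
    borelize (EuclideanSpace ℝ (Fin (n + 1)) →L[ℝ] F)
    exact (measurable_fderiv ℝ u).enorm
  have hn : (n : ℝ) ≠ 0 := by linarith [hp.lt]
  rw [← htoLp.lintegral_comp (hu.continuous.enorm.measurable.pow_const p),
    ← htoLp.lintegral_comp hderiv]
  calc ∫⁻ x : Fin (n + 1) → ℝ, ‖u (.toLp 2 x)‖ₑ ^ p
      = ∫⁻ x : Fin (n + 1) → ℝ, ∏ _i : Fin (n + 1), ‖u (.toLp 2 x)‖ₑ ^ (1 / n : ℝ) := by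
        congr! 2 with x
        rw [Finset.prod_const, Finset.card_univ, Fintype.card_fin, ← ENNReal.rpow_mul_natCast,
          hp.conjugate_eq]
        congr 1
        push_cast
        field_simp
        rw [add_sub_cancel_right, div_self hn]
    _ ≤ ∫⁻ x : Fin (n + 1) → ℝ, ∏ i,
          (∫⁻ t, ‖fderiv ℝ u (.toLp 2 (Function.update x i t))‖ₑ) ^ (1 / n : ℝ) := by
        refine lintegral_mono_ae ?_
        filter_upwards [ae_enorm_le_lintegral_enorm_fderiv_update hu hint] with x hx
        gcongr with i
        exact hx i
    _ ≤ (∫⁻ x : Fin (n + 1) → ℝ, ‖fderiv ℝ u (.toLp 2 x)‖ₑ) ^ p := by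
        simpa [volume_pi] using lintegral_prod_lintegral_pow_le (fun _ : Fin (n + 1) => volume)
          (by simpa using hp) (hderiv.comp htoLp.measurable)

end Sobolev

section Powers

theorem eLpNorm_two_le_eLpNorm_fderiv_one {F : Type*} [NormedAddCommGroup F] [NormedSpace ℝ F]
    [CompleteSpace F] {u : EuclideanSpace ℝ (Fin 2) → F}
    (hu : Differentiable ℝ u) (hint : Integrable u) :
    eLpNorm u 2 ≤ eLpNorm (fderiv ℝ u) 1 := by
  have hp : Real.HolderConjugate ((1 : ℕ) + 1) 2 := by
    norm_num [Real.holderConjugate_iff]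
  have h := lintegral_enorm_rpow_le_lintegral_enorm_fderiv_rpow hp hu hint
  rw [← eLpNorm_one_eq_lintegral_enorm] at h
  rw [eLpNorm_eq_lintegral_rpow_enorm_toReal two_ne_zero ofNat_ne_top, toReal_ofNat]
  exact (rpow_le_rpow h (by norm_num)).trans_eq (by rw [one_div, rpow_rpow_inv two_ne_zero])

theorem eLpNorm_fderiv_pow_succ_one_le {E 𝕜 : Type*} [NormedAddCommGroup E] [NormedSpace ℝ E]
    [FiniteDimensional ℝ E] [MeasurableSpace E] [BorelSpace E] [RCLike 𝕜]
    {φ : E → 𝕜} (hφ : Differentiable ℝ φ) (n : ℕ) (μ : Measure E) :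
    eLpNorm (fderiv ℝ fun x => φ x ^ (n + 1)) 1 μ
      ≤ (n + 1 : ℕ) * eLpNorm (fun x => φ x ^ n) 2 μ * eLpNorm (fderiv ℝ φ) 2 μ := by
  have hderiv : (fderiv ℝ fun x => φ x ^ (n + 1))
      = fun x => ((n + 1 : ℕ) • φ x ^ n) • fderiv ℝ φ x :=
    funext fun x => fderiv_fun_pow (n + 1) (hφ x)
  rw [hderiv]
  refine eLpNorm_le_eLpNorm_mul_eLpNorm_of_nnnorm (hφ.continuous.pow n).aestronglyMeasurable
    (measurable_fderiv ℝ φ).aestronglyMeasurable (fun a L => ((n + 1) • a) • L) (n + 1 : ℕ)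
    (.of_forall fun x => ?_)
  simp only [nnnorm_smul]
  gcongr
  exact nnnorm_nsmul_le

variable {𝕜 : Type*} [RCLike 𝕜] {φ : EuclideanSpace ℝ (Fin 2) → 𝕜}

theorem eLpNorm_pow_succ_two_le (hφ : Differentiable ℝ φ) (n : ℕ)
    (hint : Integrable fun x => φ x ^ (n + 1)) :
    eLpNorm (fun x => φ x ^ (n + 1)) 2
      ≤ (n + 1 : ℕ) * eLpNorm (fun x => φ x ^ n) 2 * eLpNorm (fderiv ℝ φ) 2 :=
  (eLpNorm_two_le_eLpNorm_fderiv_one (hφ.fun_pow (n + 1)) hint).trans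
    (eLpNorm_fderiv_pow_succ_one_le hφ n volume)

theorem memLp_pow_succ_and_eLpNorm_le (hφ : Differentiable ℝ φ) (hφ2 : MemLp φ 2)
    (hderiv : MemLp (fderiv ℝ φ) 2) (n : ℕ) :
    MemLp (fun x => φ x ^ (n + 1)) 2 ∧ eLpNorm (fun x => φ x ^ (n + 1)) 2
      ≤ (n + 1).factorial * eLpNorm φ 2 * eLpNorm (fderiv ℝ φ) 2 ^ n := by
  induction n with
  | zero => simpa using hφ2
  | succ n ih =>
    obtain ⟨hmem, hle⟩ := ih
    have hint : Integrable fun x => φ x ^ (n + 1 + 1) := by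
      simp only [pow_succ _ (n + 1)]
      exact hmem.integrable_mul hφ2
    have hbound : eLpNorm (fun x => φ x ^ (n + 1 + 1)) 2 ≤
        (n + 1 + 1).factorial * eLpNorm φ 2 * eLpNorm (fderiv ℝ φ) 2 ^ (n + 1) := by
      refine (eLpNorm_pow_succ_two_le hφ (n + 1) hint).trans ?_
      refine (mul_le_mul_left (mul_le_mul_right hle _) _).trans_eq ?_
      rw [Nat.factorial_succ (n + 1), Nat.cast_mul]
      ring
    refine ⟨⟨(hφ.continuous.pow _).aestronglyMeasurable, hbound.trans_lt ?_⟩, hbound⟩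
    exact mul_lt_top (mul_lt_top (natCast_lt_top _) hφ2.2) (pow_lt_top hderiv.2)

end Powers

section Convolution

theorem lintegral_mul_rpow_le_lintegral_rpow_mul {α : Type*} [MeasurableSpace α] {μ : Measure α}
    {f g : α → ℝ≥0∞} (hf : Measurable f) (hg : Measurable g) {p : ℝ} (hp : 1 ≤ p) :
    (∫⁻ y, f y * g y ∂μ) ^ p ≤ (∫⁻ y, g y ∂μ) ^ (p - 1) * ∫⁻ y, f y ^ p * g y ∂μ := by
  have hp0 : 0 < p := one_pos.trans_le hp
  have hq : 0 ≤ 1 - p⁻¹ := sub_nonneg.2 (inv_le_one_of_one_le₀ hp)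
  have hfactor : ∀ y, f y * g y = (f y ^ p * g y) ^ p⁻¹ * g y ^ (1 - p⁻¹) := fun y => by
    rw [mul_rpow_of_nonneg _ _ (inv_nonneg.2 hp0.le), rpow_rpow_inv hp0.ne', mul_assoc,
      ← rpow_add_of_nonneg _ _ (inv_nonneg.2 hp0.le) hq, add_sub_cancel, rpow_one]
  calc (∫⁻ y, f y * g y ∂μ) ^ p
      ≤ ((∫⁻ y, f y ^ p * g y ∂μ) ^ p⁻¹ * (∫⁻ y, g y ∂μ) ^ (1 - p⁻¹)) ^ p := by
        simp only [hfactor]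
        gcongr
        exact lintegral_mul_norm_pow_le ((hf.pow_const p).mul hg).aemeasurable hg.aemeasurable
          (inv_nonneg.2 hp0.le) hq (add_sub_cancel _ _)
    _ = (∫⁻ y, g y ∂μ) ^ (p - 1) * ∫⁻ y, f y ^ p * g y ∂μ := by
        rw [mul_rpow_of_nonneg _ _ hp0.le, rpow_inv_rpow hp0.ne', ← rpow_mul, sub_mul, one_mul,
          inv_mul_cancel₀ hp0.ne', mul_comm]

theorem lintegral_lconvolution {G : Type*} [AddGroup G] [MeasurableSpace G] [MeasurableAdd₂ G]
    [MeasurableNeg G] {μ : Measure G} [μ.IsAddLeftInvariant] [SFinite μ] {f g : G → ℝ≥0∞}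
    (hf : Measurable f) (hg : Measurable g) :
    ∫⁻ x, (f ⋆ₗ[μ] g) x ∂μ = (∫⁻ x, f x ∂μ) * ∫⁻ x, g x ∂μ := by
  simp only [lconvolution_def]
  rw [lintegral_lintegral_swap (by fun_prop), ← lintegral_mul_const _ hf]
  congr! 2 with y
  rw [lintegral_const_mul _ (by fun_prop), lintegral_add_left_eq_self]

variable {G : Type*} [AddCommGroup G] [MeasurableSpace G] {μ : Measure G} {f g : G → ℝ≥0∞}

theorem lconvolution_le_lconvolution_indicator_add {s : Set G} (hf : Measurable f)
    {M : ℝ≥0∞} (hM : ∀ x ∉ s, g x ≤ M) (x : G) :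
    (f ⋆ₗ[μ] g) x ≤ (f ⋆ₗ[μ] s.indicator g) x + M * ∫⁻ y, f y ∂μ := by
  have hg_le : ∀ z, g z ≤ s.indicator g z + M := fun z => by
    by_cases hz : z ∈ s
    · simp only [Set.indicator_of_mem hz, le_self_add]
    · simpa only [Set.indicator_of_notMem hz, zero_add] using hM z hz
  calc (f ⋆ₗ[μ] g) x
      ≤ ∫⁻ y, f y * s.indicator g (-y + x) + M * f y ∂μ := by
        refine lintegral_mono fun y => (mul_le_mul_right (hg_le (-y + x)) (f y)).trans_eq ?_
        rw [mul_add, mul_comm (f y) M]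
    _ = (f ⋆ₗ[μ] s.indicator g) x + M * ∫⁻ y, f y ∂μ := by
        rw [lintegral_add_right _ (hf.const_mul M), lintegral_const_mul M hf, lconvolution_def]

variable [MeasurableAdd₂ G] [MeasurableNeg G]

theorem lintegral_neg_add_eq_self [μ.IsAddLeftInvariant] [μ.IsNegInvariant] (g : G → ℝ≥0∞)
    (x : G) : ∫⁻ y, g (-y + x) ∂μ = ∫⁻ y, g y ∂μ := by
  simpa only [neg_add_eq_sub] using lintegral_sub_left_eq_self g x

variable [SFinite μ]

theorem lintegral_prod_mul_eq_lintegral_mul_lconvolution_sq (hf : Measurable f)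
    (hg : Measurable g) :
    ∫⁻ w : G × G × G, g (w.1 - w.2.1) * g (w.1 - w.2.2) * (f w.1 * f w.2.1 * f w.2.2)
        ∂μ.prod (μ.prod μ)
      = ∫⁻ x, f x * (f ⋆ₗ[μ] g) x ^ 2 ∂μ := by
  rw [lintegral_prod _ (by fun_prop)]
  congr! 2 with x
  calc ∫⁻ z : G × G, g (x - z.1) * g (x - z.2) * (f x * f z.1 * f z.2) ∂μ.prod μ
      = ∫⁻ z : G × G, f x * ((f z.1 * g (x - z.1)) * (f z.2 * g (x - z.2))) ∂μ.prod μ := by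
        congr! 2 with z
        ring
    _ = f x * (f ⋆ₗ[μ] g) x ^ 2 := by
        simp only [lconvolution_def, neg_add_eq_sub]
        rw [lintegral_const_mul _ (by fun_prop), sq,
          lintegral_prod_mul (f := fun y => f y * g (x - y)) (g := fun y => f y * g (x - y))
            (by fun_prop) (by fun_prop)]

variable [μ.IsAddLeftInvariant] [μ.IsNegInvariant]

theorem lintegral_lconvolution_rpow_le (hf : Measurable f) (hg : Measurable g) {p : ℝ}
    (hp : 1 ≤ p) :
    ∫⁻ x, (f ⋆ₗ[μ] g) x ^ p ∂μ ≤ (∫⁻ x, g x ∂μ) ^ p * ∫⁻ x, f x ^ p ∂μ := by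
  have hpow : Measurable fun x => f x ^ p := hf.pow_const p
  calc ∫⁻ x, (f ⋆ₗ[μ] g) x ^ p ∂μ
      ≤ ∫⁻ x, (∫⁻ y, g y ∂μ) ^ (p - 1) * ((fun y => f y ^ p) ⋆ₗ[μ] g) x ∂μ := by
        refine lintegral_mono fun x => ?_
        rw [← lintegral_neg_add_eq_self g x]
        exact lintegral_mul_rpow_le_lintegral_rpow_mul hf (by fun_prop) hp
    _ = (∫⁻ x, g x ∂μ) ^ (p - 1) * (∫⁻ x, g x ∂μ) ^ (1 : ℝ) * ∫⁻ x, f x ^ p ∂μ := by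
        rw [lintegral_const_mul _ (measurable_lconvolution μ hpow hg),
          lintegral_lconvolution hpow hg, rpow_one, mul_assoc, mul_comm (∫⁻ x, g x ∂μ)]
    _ = (∫⁻ x, g x ∂μ) ^ p * ∫⁻ x, f x ^ p ∂μ := by
        rw [← rpow_add_of_nonneg _ _ (sub_nonneg.2 hp) zero_le_one, sub_add_cancel]

theorem lintegral_mul_lconvolution_rpow_le (hf : Measurable f) (hg : Measurable g) {q : ℝ}
    (hq : 0 ≤ q) :
    ∫⁻ x, f x * (f ⋆ₗ[μ] g) x ^ q ∂μ ≤ (∫⁻ x, g x ∂μ) ^ q * ∫⁻ x, f x ^ (q + 1) ∂μ := by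
  have hq1 : 0 < q + 1 := by positivity
  have hconv : Measurable (f ⋆ₗ[μ] g) := measurable_lconvolution μ hf hg
  set A := ∫⁻ x, f x ^ (q + 1) ∂μ
  calc ∫⁻ x, f x * (f ⋆ₗ[μ] g) x ^ q ∂μ
      = ∫⁻ x, (f x ^ (q + 1)) ^ (q + 1)⁻¹ * ((f ⋆ₗ[μ] g) x ^ (q + 1)) ^ (q / (q + 1)) ∂μ := by
        congr! 2 with x
        rw [rpow_rpow_inv hq1.ne', ← rpow_mul, mul_div_cancel₀ q hq1.ne']
    _ ≤ A ^ (q + 1)⁻¹ * (∫⁻ x, (f ⋆ₗ[μ] g) x ^ (q + 1) ∂μ) ^ (q / (q + 1)) :=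
        lintegral_mul_norm_pow_le (hf.pow_const _).aemeasurable (hconv.pow_const _).aemeasurable
          (by positivity) (by positivity) (by field_simp; ring)
    _ ≤ A ^ (q + 1)⁻¹ * ((∫⁻ x, g x ∂μ) ^ (q + 1) * A) ^ (q / (q + 1)) := by
        gcongr
        exact lintegral_lconvolution_rpow_le hf hg (by linarith)
    _ = (∫⁻ x, g x ∂μ) ^ q * A := by
        rw [mul_rpow_of_nonneg _ _ (by positivity), ← rpow_mul, mul_div_cancel₀ q hq1.ne',
          mul_left_comm, ← rpow_add_of_nonneg _ _ (by positivity) (by positivity),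
          show (q + 1)⁻¹ + q / (q + 1) = 1 by field_simp; ring, rpow_one]

theorem lintegral_mul_lconvolution_sq_le {s : Set G} (hs : MeasurableSet s)
    (hf : Measurable f) (hg : Measurable g) {M : ℝ≥0∞} (hM : ∀ x ∉ s, g x ≤ M) :
    ∫⁻ x, f x * (f ⋆ₗ[μ] g) x ^ 2 ∂μ
      ≤ 2 * ((∫⁻ x in s, g x ∂μ) ^ 2 * ∫⁻ x, f x ^ 3 ∂μ + M ^ 2 * (∫⁻ x, f x ∂μ) ^ 3) := by
  set I := ∫⁻ x, f x ∂μ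
  set h := f ⋆ₗ[μ] s.indicator g
  have hgs : Measurable (s.indicator g) := hg.indicator hs
  have hh : Measurable h := measurable_lconvolution μ hf hgs
  have hsq : ∀ x, (f ⋆ₗ[μ] g) x ^ 2 ≤ 2 * (h x ^ 2 + (M * I) ^ 2) := fun x =>
    calc (f ⋆ₗ[μ] g) x ^ 2
        ≤ (h x + M * I) ^ 2 := by
          gcongr
          exact lconvolution_le_lconvolution_indicator_add hf hM x
      _ ≤ 2 * (h x ^ 2 + (M * I) ^ 2) := by
          simpa only [rpow_two, show (2 : ℝ) - 1 = 1 by norm_num, rpow_one]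
            using rpow_add_le_mul_rpow_add_rpow (h x) (M * I) one_le_two
  have hnear : ∫⁻ x, f x * h x ^ 2 ∂μ ≤ (∫⁻ x in s, g x ∂μ) ^ 2 * ∫⁻ x, f x ^ 3 ∂μ := by
    have hYoung := lintegral_mul_lconvolution_rpow_le hf hgs (μ := μ) zero_le_two
    rw [show (2 : ℝ) + 1 = (3 : ℕ) by norm_num, lintegral_indicator hs] at hYoung
    simpa only [rpow_two, rpow_natCast] using hYoung
  calc ∫⁻ x, f x * (f ⋆ₗ[μ] g) x ^ 2 ∂μ
      ≤ ∫⁻ x, 2 * (f x * h x ^ 2 + (M * I) ^ 2 * f x) ∂μ := by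
        refine lintegral_mono fun x => (mul_le_mul_right (hsq x) (f x)).trans_eq ?_
        ring
    _ = 2 * (∫⁻ x, f x * h x ^ 2 ∂μ + M ^ 2 * I ^ 3) := by
        rw [lintegral_const_mul _ (by fun_prop), lintegral_add_left (by fun_prop),
          lintegral_const_mul _ hf]
        ring
    _ ≤ 2 * ((∫⁻ x in s, g x ∂μ) ^ 2 * ∫⁻ x, f x ^ 3 ∂μ + M ^ 2 * I ^ 3) := by gcongr

end Convolution

section TruncatedPower

theorem intervalIntegral_pow_mul_inv_max_pow (n : ℕ) {R : ℝ} (hR : 0 < R) (hR1 : R ≤ 1) :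
    ∫ y in (0 : ℝ)..1, y ^ n * (max R y ^ (n + 1))⁻¹ = 1 / (n + 1) - Real.log R := by
  have hcont : Continuous fun y : ℝ => y ^ n * (max R y ^ (n + 1))⁻¹ :=
    (continuous_pow n).mul (((continuous_const.max continuous_id).pow _).inv₀ fun y =>
      (pow_pos (hR.trans_le (le_max_left R y)) _).ne')
  have hinner : ∫ y in (0 : ℝ)..R, y ^ n * (max R y ^ (n + 1))⁻¹ = 1 / (n + 1) := by
    rw [intervalIntegral.integral_congr fun y hy => by
      rw [max_eq_left (Set.uIcc_of_le hR.le ▸ hy).2]]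
    rw [intervalIntegral.integral_mul_const, integral_pow]
    field_simp
    simp
  have houter : ∫ y in R..1, y ^ n * (max R y ^ (n + 1))⁻¹ = -Real.log R := by
    have hcancel : Set.EqOn (fun y => y ^ n * (max R y ^ (n + 1))⁻¹) (fun y => y⁻¹)
        (Set.uIcc R 1) := fun y hy => by
      have hRy : R ≤ y := (Set.uIcc_of_le hR1 ▸ hy).1
      have hy0 : y ≠ 0 := (hR.trans_le hRy).ne'
      simp only [max_eq_right hRy]
      rw [pow_succ, mul_inv, mul_inv_cancel_left₀ (pow_ne_zero n hy0)]
    rw [intervalIntegral.integral_congr hcancel, integral_inv_of_pos hR one_pos, one_div,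
      Real.log_inv]
  rw [← intervalIntegral.integral_add_adjacent_intervals (hcont.intervalIntegrable 0 R)
    (hcont.intervalIntegrable R 1), hinner, houter, sub_eq_add_neg]

variable {E : Type*} [NormedAddCommGroup E] [NormedSpace ℝ E] [Nontrivial E]
  [FiniteDimensional ℝ E] [MeasurableSpace E] [BorelSpace E] (μ : Measure E) [μ.IsAddHaarMeasure]

theorem setIntegral_ball_fun_norm_addHaar {F : Type*} [NormedAddCommGroup F] [NormedSpace ℝ F]
    (f : ℝ → F) {r : ℝ} (hr : 0 ≤ r) :
    ∫ x in Metric.ball (0 : E) r, f ‖x‖ ∂μ = Module.finrank ℝ E • μ.real (Metric.ball 0 1) •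
      ∫ y in 0..r, y ^ (Module.finrank ℝ E - 1) • f y := by
  have hball : (Metric.ball (0 : E) r).indicator (fun x => f ‖x‖)
      = fun x => (Set.Iio r).indicator f ‖x‖ := by
    ext x
    classical simp only [Set.indicator_apply, mem_ball_zero_iff, Set.mem_Iio]
  rw [← integral_indicator measurableSet_ball, hball, integral_fun_norm_addHaar,
    intervalIntegral.integral_of_le hr, integral_Ioc_eq_integral_Ioo, ← Set.Ioi_inter_Iio,
    ← setIntegral_indicator measurableSet_Iio]
  simp only [Set.indicator_smul]

theorem setIntegral_ball_inv_max_norm_pow_finrank {R : ℝ} (hR : 0 < R) (hR1 : R ≤ 1) :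
    ∫ x in Metric.ball (0 : E) 1, (max R ‖x‖ ^ Module.finrank ℝ E)⁻¹ ∂μ
      = μ.real (Metric.ball 0 1) * (1 - Module.finrank ℝ E * Real.log R) := by
  obtain ⟨n, hn⟩ := Nat.exists_eq_succ_of_ne_zero (Module.finrank_pos (R := ℝ) (M := E)).ne'
  rw [setIntegral_ball_fun_norm_addHaar μ (fun y => (max R y ^ Module.finrank ℝ E)⁻¹) zero_le_one,
    hn, Nat.succ_sub_one]
  simp only [smul_eq_mul, nsmul_eq_mul]
  rw [intervalIntegral_pow_mul_inv_max_pow n hR hR1]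
  push_cast
  field_simp

theorem setLIntegral_ball_inv_max_norm_pow_finrank {R : ℝ} (hR : 0 < R) (hR1 : R ≤ 1) :
    ∫⁻ x in Metric.ball (0 : E) 1, ENNReal.ofReal (max R ‖x‖ ^ Module.finrank ℝ E)⁻¹ ∂μ
      = ENNReal.ofReal (μ.real (Metric.ball 0 1) * (1 - Module.finrank ℝ E * Real.log R)) := by
  have hcont : Continuous fun x : E => (max R ‖x‖ ^ Module.finrank ℝ E)⁻¹ :=
    ((continuous_const.max continuous_norm).pow _).inv₀ fun x =>
      (pow_pos (hR.trans_le (le_max_left R ‖x‖)) _).ne'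
  rw [← setIntegral_ball_inv_max_norm_pow_finrank μ hR hR1,
    ofReal_integral_eq_lintegral_ofReal _ (.of_forall fun x => by positivity)]
  exact hcont.continuousOn.integrableOn_of_subset_isCompact (isCompact_closedBall 0 1)
    measurableSet_ball Metric.ball_subset_closedBall measure_ball_lt_top.ne

end TruncatedPower

theorem eLpNorm_two_sq_eq_lintegral {α F : Type*} [MeasurableSpace α] [NormedAddCommGroup F]
    (f : α → F) (μ : Measure α) : eLpNorm f 2 μ ^ 2 = ∫⁻ x, ‖f x‖ₑ ^ 2 ∂μ := by
  simpa only [NNReal.coe_ofNat, rpow_two]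
    using! eLpNorm_nnreal_pow_eq_lintegral (f := f) (μ := μ) two_ne_zero

theorem ofReal_inner_sq_mul_le {E F : Type*} [NormedAddCommGroup E] [InnerProductSpace ℝ E]
    [NormedAddCommGroup F] (v w : E) (a b c : F) :
    ENNReal.ofReal ((⟪v, w⟫ : ℝ) ^ 2 * ‖a‖ ^ 2 * ‖b‖ ^ 2 * ‖c‖ ^ 2)
      ≤ ‖v‖ₑ ^ 2 * ‖w‖ₑ ^ 2 * (‖a‖ₑ ^ 2 * ‖b‖ₑ ^ 2 * ‖c‖ₑ ^ 2) := by
  have hCS : ‖(⟪v, w⟫ : ℝ)‖ₑ ≤ ‖v‖ₑ * ‖w‖ₑ := by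
    rw [← enorm_norm v, ← enorm_norm w, ← enorm_mul, enorm_le_iff_norm_le, norm_mul, norm_norm,
      norm_norm]
    exact norm_inner_le_norm v w
  rw [← Real.enorm_of_nonneg (by positivity)]
  simp only [enorm_mul, enorm_pow, enorm_norm]
  calc ‖(⟪v, w⟫ : ℝ)‖ₑ ^ 2 * ‖a‖ₑ ^ 2 * ‖b‖ₑ ^ 2 * ‖c‖ₑ ^ 2
      = ‖(⟪v, w⟫ : ℝ)‖ₑ ^ 2 * (‖a‖ₑ ^ 2 * ‖b‖ₑ ^ 2 * ‖c‖ₑ ^ 2) := by ring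
    _ ≤ (‖v‖ₑ * ‖w‖ₑ) ^ 2 * (‖a‖ₑ ^ 2 * ‖b‖ₑ ^ 2 * ‖c‖ₑ ^ 2) := by gcongr
    _ = ‖v‖ₑ ^ 2 * ‖w‖ₑ ^ 2 * (‖a‖ₑ ^ 2 * ‖b‖ₑ ^ 2 * ‖c‖ₑ ^ 2) := by rw [mul_pow]

section Kernel

theorem norm_perp (x : E2) : ‖perp x‖ = ‖x‖ := by
  simp [perp, EuclideanSpace.norm_eq, Fin.sum_univ_two, add_comm]

theorem norm_K_le (R : ℝ) (x : E2) : ‖K R x‖ ≤ (max R ‖x‖)⁻¹ := by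
  have hmax : 0 ≤ max R ‖x‖ := (norm_nonneg x).trans (le_max_right R _)
  calc ‖K R x‖ = (max R ‖x‖)⁻¹ * ((max R ‖x‖)⁻¹ * ‖x‖) := by
        rw [K, norm_smul, norm_perp, norm_inv, norm_pow, Real.norm_of_nonneg hmax, sq, mul_inv,
          mul_assoc]
    _ ≤ (max R ‖x‖)⁻¹ * 1 := by
        gcongr
        exact inv_mul_le_one_of_le₀ (le_max_right R _) hmax
    _ = (max R ‖x‖)⁻¹ := mul_one _

theorem continuous_perp : Continuous perp :=
  (PiLp.continuous_toLp 2 _).comp (by fun_prop : Continuous fun x : E2 => ![-(x 1), x 0])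

theorem measurable_K (R : ℝ) : Measurable (K R) :=
  ((measurable_const.max measurable_norm).pow_const 2).inv.smul continuous_perp.measurable

theorem enorm_K_sq_le (R : ℝ) (x : E2) : ‖K R x‖ₑ ^ 2 ≤ ENNReal.ofReal (max R ‖x‖ ^ 2)⁻¹ := by
  rw [← ofReal_norm, ← ofReal_pow (norm_nonneg _), ← inv_pow]
  gcongr
  exact norm_K_le R x

theorem enorm_K_sq_le_one_of_notMem_ball (R : ℝ) {x : E2} (hx : x ∉ Metric.ball 0 1) :
    ‖K R x‖ₑ ^ 2 ≤ 1 := by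
  have hmax : 1 ≤ max R ‖x‖ := le_max_of_le_right (by simpa using hx)
  refine (enorm_K_sq_le R x).trans (ofReal_le_one.2 (inv_le_one_of_one_le₀ ?_))
  exact one_le_pow₀ hmax

theorem one_le_neg_log_of_lt_exp_neg_one {R : ℝ} (hR : 0 < R) (hR1 : R < Real.exp (-1)) :
    1 ≤ -Real.log R :=
  le_neg_of_le_neg ((Real.log_lt_iff_lt_exp hR).2 hR1).le

theorem setLIntegral_ball_enorm_K_sq_le {R : ℝ} (hR : 0 < R) (hR1 : R < Real.exp (-1)) :
    ∫⁻ x in Metric.ball 0 1, ‖K R x‖ₑ ^ 2 ≤ ENNReal.ofReal (3 * Real.pi * -Real.log R) := by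
  have hlog : 1 ≤ -Real.log R := one_le_neg_log_of_lt_exp_neg_one hR hR1
  have hR_le : R ≤ 1 := hR1.le.trans (Real.exp_le_one_iff.2 (by norm_num))
  have hball : volume.real (Metric.ball (0 : E2) 1) = Real.pi := by
    simp [measureReal_def, Real.pi_nonneg]
  have hmass := setLIntegral_ball_inv_max_norm_pow_finrank (volume : Measure E2) hR hR_le
  rw [finrank_euclideanSpace_fin, hball, Nat.cast_two] at hmass
  calc ∫⁻ x in Metric.ball 0 1, ‖K R x‖ₑ ^ 2
      ≤ ∫⁻ x in Metric.ball (0 : E2) 1, ENNReal.ofReal (max R ‖x‖ ^ 2)⁻¹ :=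
        lintegral_mono fun x => enorm_K_sq_le R x
    _ = ENNReal.ofReal (Real.pi * (1 - 2 * Real.log R)) := hmass
    _ ≤ ENNReal.ofReal (3 * Real.pi * -Real.log R) := by
        refine ofReal_le_ofReal ?_
        nlinarith [Real.pi_pos]

end Kernel

section SobolevNorm

theorem eLpNorm_two_le_H1 (φ : E2 → ℂ) : eLpNorm φ 2 ≤ H1 φ := by
  rw [H1, one_div, le_rpow_inv_iff two_pos, rpow_two]
  exact le_self_add

theorem eLpNorm_fderiv_two_le_H1 (φ : E2 → ℂ) : eLpNorm (fderiv ℝ φ) 2 ≤ H1 φ := by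
  rw [H1, one_div, le_rpow_inv_iff two_pos, rpow_two]
  exact le_add_self

theorem lintegral_enorm_sq_le_H1_sq (φ : E2 → ℂ) : ∫⁻ x, ‖φ x‖ₑ ^ 2 ≤ H1 φ ^ 2 := by
  rw [← eLpNorm_two_sq_eq_lintegral]
  exact pow_le_pow_left' (eLpNorm_two_le_H1 φ) 2

variable {φ : E2 → ℂ}

theorem eLpNorm_pow_succ_two_le_H1_pow (hφ : Differentiable ℝ φ) (hH1 : H1 φ < ⊤) (n : ℕ) :
    eLpNorm (fun x => φ x ^ (n + 1)) 2 ≤ (n + 1).factorial * H1 φ ^ (n + 1) := by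
  have hφ2 : MemLp φ 2 :=
    ⟨hφ.continuous.aestronglyMeasurable, (eLpNorm_two_le_H1 φ).trans_lt hH1⟩
  have hderiv : MemLp (fderiv ℝ φ) 2 :=
    ⟨(measurable_fderiv ℝ φ).aestronglyMeasurable, (eLpNorm_fderiv_two_le_H1 φ).trans_lt hH1⟩
  refine (memLp_pow_succ_and_eLpNorm_le hφ hφ2 hderiv n).2.trans ?_
  rw [pow_succ' (H1 φ), ← mul_assoc]
  exact mul_le_mul' (mul_le_mul_right (eLpNorm_two_le_H1 φ) _)
    (pow_le_pow_left' (eLpNorm_fderiv_two_le_H1 φ) n)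

theorem lintegral_enorm_sq_pow_succ_le_H1_pow (hφ : Differentiable ℝ φ) (hH1 : H1 φ < ⊤)
    (n : ℕ) :
    ∫⁻ x, (‖φ x‖ₑ ^ 2) ^ (n + 1) ≤ ((n + 1).factorial * H1 φ ^ (n + 1)) ^ 2 := by
  have hpow : ∀ x, (‖φ x‖ₑ ^ 2) ^ (n + 1) = ‖φ x ^ (n + 1)‖ₑ ^ 2 := fun x => by
    rw [enorm_pow, pow_right_comm]
  simp only [hpow]
  rw [← eLpNorm_two_sq_eq_lintegral]
  exact pow_le_pow_left' (eLpNorm_pow_succ_two_le_H1_pow hφ hH1 n) 2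

theorem lintegral_enorm_sq_mul_lconvolution_sq_le_H1_pow_six (hφ : Differentiable ℝ φ)
    (hH1 : H1 φ < ⊤) {k : E2 → ℝ≥0∞} (hk : Measurable k) {s : Set E2} (hs : MeasurableSet s)
    {M : ℝ≥0∞} (hM : ∀ x ∉ s, k x ≤ M) :
    ∫⁻ x, ‖φ x‖ₑ ^ 2 * ((fun y => ‖φ y‖ₑ ^ 2) ⋆ₗ k) x ^ 2
      ≤ (72 * (∫⁻ x in s, k x) ^ 2 + 2 * M ^ 2) * H1 φ ^ 6 := by
  have hsix : ∫⁻ x, (‖φ x‖ₑ ^ 2) ^ 3 ≤ 36 * H1 φ ^ 6 := by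
    refine (lintegral_enorm_sq_pow_succ_le_H1_pow hφ hH1 2).trans_eq ?_
    rw [mul_pow, ← pow_mul]
    norm_num [Nat.factorial]
  have hmeas : Measurable fun x => ‖φ x‖ₑ ^ 2 := hφ.continuous.measurable.enorm.pow_const 2
  calc ∫⁻ x, ‖φ x‖ₑ ^ 2 * ((fun y => ‖φ y‖ₑ ^ 2) ⋆ₗ k) x ^ 2
      ≤ 2 * ((∫⁻ x in s, k x) ^ 2 * (∫⁻ x, (‖φ x‖ₑ ^ 2) ^ 3)
          + M ^ 2 * (∫⁻ x, ‖φ x‖ₑ ^ 2) ^ 3) :=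
        lintegral_mul_lconvolution_sq_le hs hmeas hk hM
    _ ≤ 2 * ((∫⁻ x in s, k x) ^ 2 * (36 * H1 φ ^ 6) + M ^ 2 * (H1 φ ^ 2) ^ 3) := by
        gcongr
        exact lintegral_enorm_sq_le_H1_sq φ
    _ = (72 * (∫⁻ x in s, k x) ^ 2 + 2 * M ^ 2) * H1 φ ^ 6 := by ring

end SobolevNorm

theorem lintegral_threeBody_le_lintegral_mul_lconvolution_sq (R : ℝ) {φ : E2 → ℂ}
    (hφ : Measurable φ) :
    ∫⁻ w : E2 × E2 × E2,
        ENNReal.ofReal ((⟪K R (w.1 - w.2.1), K R (w.1 - w.2.2)⟫ : ℝ) ^ 2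
          * ‖φ w.1‖ ^ 2 * ‖φ w.2.1‖ ^ 2 * ‖φ w.2.2‖ ^ 2)
      ≤ ∫⁻ x, ‖φ x‖ₑ ^ 2 * ((fun y => ‖φ y‖ₑ ^ 2) ⋆ₗ fun y => ‖K R y‖ₑ ^ 2) x ^ 2 :=
  (lintegral_mono fun _ => ofReal_inner_sq_mul_le _ _ _ _ _).trans_eq
    (lintegral_prod_mul_eq_lintegral_mul_lconvolution_sq (hφ.enorm.pow_const 2)
      ((measurable_K R).enorm.pow_const 2))

theorem near_mass_sq_add_far_bound_le {L : ℝ} (hL : 1 ≤ L) :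
    72 * ENNReal.ofReal (3 * Real.pi * L) ^ 2 + 2 * 1 ^ 2
      ≤ ENNReal.ofReal ((648 * Real.pi ^ 2 + 2) * L ^ 2) := by
  rw [← ofReal_pow (by positivity), one_pow, mul_one, ← ofReal_ofNat 72, ← ofReal_ofNat 2,
    ← ofReal_mul (by positivity), ← ofReal_add (by positivity) (by positivity)]
  exact ofReal_le_ofReal (by nlinarith)

/-- Estimate (2.26): there is `C > 0` such that for all `0 < R < e⁻¹` and all
`φ ∈ H¹(ℝ², ℂ)`,
`∭ (K_R(x−y)·K_R(x−z))² |φ(x)|²|φ(y)|²|φ(z)|² ≤ C |log R|² ‖φ‖_{H¹}⁶`. -/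
theorem statement12 :
    ∃ C : ℝ, 0 < C ∧ ∀ R : ℝ, 0 < R → R < Real.exp (-1) →
      ∀ φ : E2 → ℂ, Differentiable ℝ φ → H1 φ < ⊤ →
        ∫⁻ w : E2 × E2 × E2,
            ENNReal.ofReal ((⟪K R (w.1 - w.2.1), K R (w.1 - w.2.2)⟫ : ℝ) ^ 2
              * ‖φ w.1‖ ^ 2 * ‖φ w.2.1‖ ^ 2 * ‖φ w.2.2‖ ^ 2)
          ≤ ENNReal.ofReal (C * (-Real.log R) ^ 2) * H1 φ ^ 6 := by
  refine ⟨648 * Real.pi ^ 2 + 2, by positivity, fun R hR hR1 φ hφ hH1 => ?_⟩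
  have hfar : ∀ x ∉ Metric.ball 0 1, ‖K R x‖ₑ ^ 2 ≤ 1 :=
    fun x hx => enorm_K_sq_le_one_of_notMem_ball R hx
  have hmass : 72 * (∫⁻ x in Metric.ball 0 1, ‖K R x‖ₑ ^ 2) ^ 2 + 2 * 1 ^ 2
      ≤ ENNReal.ofReal ((648 * Real.pi ^ 2 + 2) * (-Real.log R) ^ 2) := by
    refine le_trans ?_ (near_mass_sq_add_far_bound_le (one_le_neg_log_of_lt_exp_neg_one hR hR1))
    gcongr
    exact setLIntegral_ball_enorm_K_sq_le hR hR1
  have hsplit := lintegral_enorm_sq_mul_lconvolution_sq_le_H1_pow_six hφ hH1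
    ((measurable_K R).enorm.pow_const 2) measurableSet_ball hfar
  calc _ ≤ ∫⁻ x, ‖φ x‖ₑ ^ 2 * ((fun y => ‖φ y‖ₑ ^ 2) ⋆ₗ fun y => ‖K R y‖ₑ ^ 2) x ^ 2 :=
        lintegral_threeBody_le_lintegral_mul_lconvolution_sq R hφ.continuous.measurable
    _ ≤ (72 * (∫⁻ x in Metric.ball 0 1, ‖K R x‖ₑ ^ 2) ^ 2 + 2 * 1 ^ 2) * H1 φ ^ 6 := hsplit
    _ ≤ ENNReal.ofReal ((648 * Real.pi ^ 2 + 2) * (-Real.log R) ^ 2) * H1 φ ^ 6 := by gcongr
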